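/- arXiv:0709.0436 — 2 statements merged into one kernel-verified Lean document; each statement's English description precedes it below -/
import Mathlib

section
/- Let n, c, α, β, γ, δ be real numbers with c ≠ 0, β ≠ 0 and αδ + c = 0, and let α₁, α₂, β₁, δ₁, δ₂, X₃ be real numbers satisfying: δ₁ + βX₃ = 0, δ₂ + (γ − δ)X₃ = 0, α₁δ + αδ₁ = 0, α₂δ + αδ₂ = 0, α₂ = β₁, and ββ₁ = 2nαα₁. Then (γ − δ − 2nα)α₁ = 0 and (γ − δ − 2nα)β₁ = 0. -/
theorem stmt4 (n c α β γ δ α₁ α₂ β₁ δ₁ δ₂ X₃ : ℝ)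
    (hc : c ≠ 0) (hβ : β ≠ 0) (hαδ : α * δ + c = 0)
    (h1 : δ₁ + β * X₃ = 0)
    (h2 : δ₂ + (γ - δ) * X₃ = 0)
    (h3 : α₁ * δ + α * δ₁ = 0)
    (h4 : α₂ * δ + α * δ₂ = 0)
    (h5 : α₂ = β₁)
    (h6 : β * β₁ = 2 * n * α * α₁) :
    (γ - δ - 2 * n * α) * α₁ = 0 ∧ (γ - δ - 2 * n * α) * β₁ = 0 := by
  have hδ : δ ≠ 0 := by
    rintro rfl
    apply hc
    linarith
  have key : (γ - δ - 2 * n * α) * α₁ = 0 := by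
    apply mul_left_cancel₀ hδ
    linear_combination (γ - δ) * h3 - (γ - δ) * α * h1 + δ * h6 - β * h4 + α * β * h2 + β * δ * h5
  refine ⟨key, ?_⟩
  apply mul_left_cancel₀ hβ
  linear_combination (γ - δ - 2 * n * α) * h6 + 2 * n * α * key
end

section
/- Let α, γ, δ, c, X₁ be real numbers with c ≠ 0, αδ + c = 0, (α − δ)γ + (γ − δ)X₁ = 0, (γ − α)δ + (γ − δ)X₁ = 0, and (αγ + c)X₁ = 0. Then γ = δ and α = γ; that is, α = γ = δ. -/
theorem stmt12 (α γ δ c X₁ : ℝ) (hc : c ≠ 0)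
    (h0 : α * δ + c = 0)
    (h1 : (α - δ) * γ + (γ - δ) * X₁ = 0)
    (h2 : (γ - α) * δ + (γ - δ) * X₁ = 0)
    (h3 : (α * γ + c) * X₁ = 0) :
    γ = δ ∧ α = γ := by
  have hα : α ≠ 0 := by
    rintro rfl
    exact hc (by linarith)
  have hδ : δ ≠ 0 := by
    rintro rfl
    exact hc (by linarith)
  have h4 : α * ((γ - δ) * X₁) = 0 := by linear_combination h3 - X₁ * h0
  have h5 : (γ - δ) * X₁ = 0 := (mul_eq_zero.mp h4).resolve_left hα
  have h6 : (γ - α) * δ = 0 := by linarith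
  have h7 : γ - α = 0 := (mul_eq_zero.mp h6).resolve_right hδ
  have h8 : γ = α := by linarith
  subst h8
  have h9 : (γ - δ) * γ = 0 := by linarith
  have h10 : γ - δ = 0 := (mul_eq_zero.mp h9).resolve_right hα
  exact ⟨by linarith, rfl⟩
end
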